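/- Let p > 2 be a prime, τ = (k_1,…,k_n) and α = (ℓ_1,…,ℓ_m) types with α ≤ τ. Then the minimum of the minimal number of generators of A(τ)/N, taken over all subgroups N ≤ A(τ) = ∏_{j=1}^n ℤ/p^{k_j}ℤ isomorphic to A(α) = ∏_{i=1}^m ℤ/p^{ℓ_i}ℤ, equals u^τ_α := max{ j − f^τ_α(j) : 1 ≤ j ≤ n }, where f^τ_α(j) = max({ i ∈ {1,…,m} : ℓ_i ≥ k_j } ∪ {0}). In particular some subgroup N of A(τ) isomorphic to A(α) attains this value. -/

import Mathlib

/-- The minimal number of generators of an additive group: the least cardinality of a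
finite generating set. -/
noncomputable def minGen (G : Type) [AddGroup G] : ℕ :=
  sInf { r | ∃ S : Finset G, S.card = r ∧ AddSubgroup.closure (S : Set G) = ⊤ }

/-- `f^τ_α(j) = max ({ i ∈ {1,…,m} : ℓ_i ≥ k_j } ∪ {0})`, with `j` 1-based
(so `k_j` is `k ⟨j-1⟩` and index `i` is represented by `(i : Fin m)` with value `i+1`). -/
def fTA {n m : ℕ} (k : Fin n → ℕ) (l : Fin m → ℕ) (j : Fin n) : ℕ :=
  (Finset.univ.filter (fun i : Fin m => k j ≤ l i)).sup (fun i => (i : ℕ) + 1)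

/-- `u^τ_α = max { j − f^τ_α(j) : 1 ≤ j ≤ n }`. -/
def uTA {n m : ℕ} (k : Fin n → ℕ) (l : Fin m → ℕ) : ℕ :=
  Finset.univ.sup (fun j : Fin n => ((j : ℕ) + 1) - fTA k l j)

/-!
Lower bound: for a prime `q ∣ p`, reduction mod `q` of the first `j` coordinates maps `A(τ)` onto
`(ℤ/q)^j` and kills every generator of `N` of order `p ^ ℓ_i` with `ℓ_i < k_j`. As at most
`f^τ_α(j)` generators of `N` survive, `A(τ)/N` needs at least `j - f^τ_α(j)` generators.

Upper bound: with `u = u^τ_α` one has `k_{i+u} ≤ ℓ_i`, so `g_i = p ^ (k_i - ℓ_i) e_i + e_{i+u}` is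
killed by `p ^ ℓ_i`. For `u > 0` the `g_i` form a triangular system, hence span a copy of `A(α)`,
and modulo their span each `e_{i+u}` is a multiple of `e_i`, so that `e_1, …, e_u` generate the
quotient. For `u = 0` the two types agree.
-/

section Rank

theorem minGen_le_card {G : Type} [AddGroup G] {S : Finset G}
    (hS : AddSubgroup.closure (S : Set G) = ⊤) : minGen G ≤ S.card :=
  Nat.sInf_le ⟨S, rfl, hS⟩

theorem minGen_eq_rank (G : Type) [AddGroup G] [AddGroup.FG G] : minGen G = AddGroup.rank G := by
  refine le_antisymm (Nat.sInf_le (AddGroup.rank_spec G)) ?_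
  refine le_csInf ⟨_, AddGroup.rank_spec G⟩ ?_
  rintro _ ⟨S, rfl, hS⟩
  exact AddGroup.rank_le hS

theorem closure_mk_image_eq_top_iff {G : Type*} [AddGroup G] (N : AddSubgroup G) [N.Normal]
    (S : Set G) :
    AddSubgroup.closure (QuotientAddGroup.mk' N '' S) = ⊤ ↔ N ⊔ AddSubgroup.closure S = ⊤ := by
  rw [← AddMonoidHom.map_closure, ← QuotientAddGroup.comap_map_mk',
    ← AddSubgroup.comap_top (QuotientAddGroup.mk' N),
    (AddSubgroup.comap_injective (QuotientAddGroup.mk'_surjective N)).eq_iff]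

theorem minGen_quotient_le_card {G : Type} [AddGroup G] {N : AddSubgroup G} [N.Normal]
    {S : Finset G} (hS : N ⊔ AddSubgroup.closure (S : Set G) = ⊤) : minGen (G ⧸ N) ≤ S.card := by
  classical
  refine (minGen_le_card (S := S.image (QuotientAddGroup.mk' N)) ?_).trans Finset.card_image_le
  rwa [Finset.coe_image, closure_mk_image_eq_top_iff]

theorem rank_le_rank_add_rank_quotient {G : Type*} [AddGroup G] [AddGroup.FG G]
    (N : AddSubgroup G) [N.Normal] [AddGroup.FG N] :
    AddGroup.rank G ≤ AddGroup.rank N + AddGroup.rank (G ⧸ N) := by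
  classical
  obtain ⟨T, hTcard, hT⟩ := AddGroup.rank_spec N
  obtain ⟨S, hScard, hS⟩ := AddGroup.rank_spec (G ⧸ N)
  have hN : AddSubgroup.closure (N.subtype '' T) = N := by
    rw [← AddMonoidHom.map_closure, hT, ← AddMonoidHom.range_eq_map, AddSubgroup.range_subtype]
  have hout : QuotientAddGroup.mk' N '' (Quotient.out '' (S : Set (G ⧸ N))) = S := by
    simp [Set.image_image]
  have hgen : AddSubgroup.closure (↑(T.image N.subtype ∪ S.image Quotient.out) : Set G) = ⊤ := by
    rw [Finset.coe_union, Finset.coe_image, Finset.coe_image, AddSubgroup.closure_union, hN,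
      ← closure_mk_image_eq_top_iff, hout, hS]
  calc AddGroup.rank G ≤ (T.image N.subtype ∪ S.image Quotient.out).card := AddGroup.rank_le hgen
    _ ≤ T.card + S.card := (Finset.card_union_le _ _).trans
        (Nat.add_le_add Finset.card_image_le Finset.card_image_le)
    _ = AddGroup.rank N + AddGroup.rank (G ⧸ N) := by rw [hTcard, hScard]

theorem rank_le_rank_map_add_rank_quotient {G H : Type*} [AddGroup G] [AddGroup.FG G] [AddGroup H]
    [AddGroup.FG H] {f : G →+ H} (hf : Function.Surjective f) (N : AddSubgroup G) [N.Normal]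
    [AddGroup.FG (N.map f)] :
    AddGroup.rank H ≤ AddGroup.rank (N.map f) + AddGroup.rank (G ⧸ N) := by
  have : (N.map f).Normal := AddSubgroup.Normal.map ‹_› f hf
  have hsurj : Function.Surjective
      (QuotientAddGroup.map N (N.map f) f (AddSubgroup.le_comap_map f N)) :=
    QuotientAddGroup.map_surjective_of_surjective _ _ _
      ((QuotientAddGroup.mk'_surjective _).comp hf) _
  exact (rank_le_rank_add_rank_quotient (N.map f)).trans
    (Nat.add_le_add_left (AddGroup.rank_le_of_surjective _ hsurj) _)

theorem finrank_le_rank (R M : Type*) [Ring R] [StrongRankCondition R] [AddCommGroup M]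
    [Module R M] [AddGroup.FG M] : Module.finrank R M ≤ AddGroup.rank M := by
  obtain ⟨S, hcard, hS⟩ := AddGroup.rank_spec M
  have hspan : Submodule.span R (S : Set M) = ⊤ := by
    rw [← Submodule.toAddSubgroup_inj, Submodule.top_toAddSubgroup, eq_top_iff, ← hS,
      AddSubgroup.closure_le]
    exact Submodule.subset_span
  rw [← hcard, ← finrank_top R M, ← hspan]
  exact finrank_span_finset_le_card S

end Rank

section PiZMod

variable {ι : Type*} {a : ι → ℕ}

theorem closure_range_single_one_eq_top [Finite ι] [DecidableEq ι] (a : ι → ℕ) :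
    AddSubgroup.closure (Set.range fun i => (Pi.single i 1 : (i : ι) → ZMod (a i))) = ⊤ := by
  cases nonempty_fintype ι
  refine eq_top_iff.2 fun x _ => ?_
  rw [← Finset.univ_sum_single x]
  refine AddSubgroup.sum_mem _ fun i _ => ?_
  obtain ⟨z, hz⟩ := ZMod.intCast_surjective (x i)
  rw [← hz, ← mul_one (z : ZMod (a i)), ← zsmul_eq_mul, Pi.single_smul]
  exact AddSubgroup.zsmul_mem _ (AddSubgroup.subset_closure (Set.mem_range_self i)) z

instance addGroupFG_pi_zmod [Finite ι] (a : ι → ℕ) : AddGroup.FG ((i : ι) → ZMod (a i)) := by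
  classical
  exact AddGroup.fg_iff.2 ⟨_, closure_range_single_one_eq_top a, Set.finite_range _⟩

theorem range_eq_closure_image_single_one [Finite ι] [DecidableEq ι] {G : Type*} [AddGroup G]
    (f : ((i : ι) → ZMod (a i)) →+ G) {t : Set ι} (ht : ∀ i ∉ t, f (Pi.single i 1) = 0) :
    f.range = AddSubgroup.closure ((fun i => f (Pi.single i 1)) '' t) := by
  refine le_antisymm ?_ ((AddSubgroup.closure_le _).2 ?_)
  · rw [AddMonoidHom.range_eq_map, ← closure_range_single_one_eq_top, AddMonoidHom.map_closure,
      AddSubgroup.closure_le]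
    rintro _ ⟨_, ⟨i, rfl⟩, rfl⟩
    by_cases hi : i ∈ t
    · exact AddSubgroup.subset_closure ⟨i, hi, rfl⟩
    · exact (ht i hi).symm ▸ AddSubgroup.zero_mem _
  · rintro _ ⟨i, -, rfl⟩
    exact ⟨_, rfl⟩

theorem nonempty_closure_range_addEquiv_pi_zmod [Fintype ι] {G : Type*} [AddCommGroup G]
    {g : ι → G} (hg : ∀ z : ι → ℤ, ∑ i, z i • g i = 0 ↔ ∀ i, (a i : ℤ) ∣ z i) :
    Nonempty (AddSubgroup.closure (Set.range g) ≃+ ((i : ι) → ZMod (a i))) := by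
  let comb : (ι → ℤ) →ₗ[ℤ] G := Fintype.linearCombination ℤ g
  let red : (ι → ℤ) →ₗ[ℤ] ((i : ι) → ZMod (a i)) :=
    LinearMap.pi fun i => (Int.castAddHom (ZMod (a i))).toIntLinearMap ∘ₗ LinearMap.proj i
  have hker : comb.ker = red.ker := by
    ext z
    simp [comb, red, Fintype.linearCombination_apply, hg, funext_iff,
      ZMod.intCast_zmod_eq_zero_iff_dvd]
  have hsurj : Function.Surjective red := fun x =>
    ⟨fun i => (ZMod.intCast_surjective (x i)).choose,
      funext fun i => (ZMod.intCast_surjective (x i)).choose_spec⟩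
  have hrange : AddSubgroup.closure (Set.range g) = comb.range.toAddSubgroup := by
    rw [Fintype.range_linearCombination, ← AddSubgroup.toIntSubmodule_closure,
      AddSubgroup.toIntSubmodule_toAddSubgroup]
  exact ⟨(AddEquiv.addSubgroupCongr hrange).trans (comb.quotKerEquivRange.symm ≪≫ₗ
    Submodule.quotEquivOfEq _ _ hker ≪≫ₗ red.quotKerEquivOfSurjective hsurj).toAddEquiv⟩

theorem castHom_eq_zero_of_nsmul_eq_zero {q c d : ℕ} (hd : d ≠ 0) (hqc : q ∣ c)
    (hqdc : q * d ∣ c) {x : ZMod c} (hx : d • x = 0) : ZMod.castHom hqc (ZMod q) x = 0 := by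
  obtain ⟨z, rfl⟩ := ZMod.intCast_surjective x
  rw [nsmul_eq_mul, ← Int.cast_natCast, ← Int.cast_mul, ZMod.intCast_zmod_eq_zero_iff_dvd] at hx
  rw [map_intCast, ZMod.intCast_zmod_eq_zero_iff_dvd]
  have hdq : (d : ℤ) * q ∣ d * z := by
    rw [← Nat.cast_mul, mul_comm]
    exact (Int.natCast_dvd_natCast.2 hqdc).trans hx
  exact (mul_dvd_mul_iff_left (Int.natCast_ne_zero.2 hd)).1 hdq

/-- Reduction mod `q` of the coordinates indexed by `s`, the map onto `(ℤ/q)^s` that bounds below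
the number of generators of a quotient of `∏ j, ℤ/a_j`. -/
def reduceCoords {q : ℕ} (s : Finset ι) (hq : ∀ j ∈ s, q ∣ a j) :
    ((j : ι) → ZMod (a j)) →+* (s → ZMod q) :=
  RingHom.pi fun j => (ZMod.castHom (hq j j.2) (ZMod q)).comp (Pi.evalRingHom _ j.1)

theorem reduceCoords_surjective {q : ℕ} (s : Finset ι) (hq : ∀ j ∈ s, q ∣ a j) :
    Function.Surjective (reduceCoords s hq) := by
  classical
  intro v
  choose x hx using fun j : s => ZMod.castHom_surjective (hq j j.2) (v j)
  refine ⟨fun j => if h : j ∈ s then x ⟨j, h⟩ else 0, funext fun j => ?_⟩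
  simp only [reduceCoords, RingHom.pi_apply, RingHom.comp_apply, Pi.evalRingHom_apply, j.2, dif_pos,
    hx]

theorem card_le_card_add_rank_quotient {κ : Type*} [Finite ι] [Finite κ] {b : κ → ℕ}
    [∀ i, NeZero (b i)] {q : ℕ} [Fact q.Prime] {s : Finset ι} {t : Finset κ}
    (hq : ∀ j ∈ s, q ∣ a j) (ht : ∀ i ∉ t, ∀ j ∈ s, q * b i ∣ a j)
    {N : AddSubgroup ((j : ι) → ZMod (a j))} (e : N ≃+ ((i : κ) → ZMod (b i))) :
    s.card ≤ t.card + AddGroup.rank (((j : ι) → ZMod (a j)) ⧸ N) := by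
  classical
  let P : ((j : ι) → ZMod (a j)) →+ (s → ZMod q) := reduceCoords s hq
  let f : ((i : κ) → ZMod (b i)) →+ (s → ZMod q) := (P.comp N.subtype).comp e.symm
  have hf : ∀ i ∉ t, f (Pi.single i 1) = 0 := by
    intro i hi
    have htors : b i • (e.symm (Pi.single i 1) : (j : ι) → ZMod (a j)) = 0 := by
      rw [← AddSubgroup.coe_nsmul, ← map_nsmul, ← Pi.single_smul]
      simp
    exact funext fun j => castHom_eq_zero_of_nsmul_eq_zero (NeZero.ne _) (hq j j.2)
      (ht i hi j j.2) (congrFun htors j)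
  have hmap : N.map P = AddSubgroup.closure (t.image fun i => f (Pi.single i 1) : Finset _) := by
    rw [Finset.coe_image, ← range_eq_closure_image_single_one f hf, AddMonoidHom.range_comp,
      AddMonoidHom.range_eq_top.2 e.symm.surjective, ← AddMonoidHom.range_eq_map,
      AddMonoidHom.range_comp, AddSubgroup.range_subtype]
  have hrank : AddGroup.rank (N.map P) ≤ t.card :=
    (AddSubgroup.rank_congr hmap).trans_le
      ((AddSubgroup.rank_closure_finset_le_card _).trans Finset.card_image_le)
  calc s.card = Module.finrank (ZMod q) (s → ZMod q) := by simp
    _ ≤ AddGroup.rank (s → ZMod q) := finrank_le_rank _ _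
    _ ≤ AddGroup.rank (N.map P) + AddGroup.rank (((j : ι) → ZMod (a j)) ⧸ N) :=
        rank_le_rank_map_add_rank_quotient (reduceCoords_surjective s hq) N
    _ ≤ t.card + AddGroup.rank (((j : ι) → ZMod (a j)) ⧸ N) := Nat.add_le_add_right hrank _

end PiZMod

section TriangularSystem

variable {n m u : ℕ} {a : Fin n → ℕ} {b : Fin m → ℕ} {hmn : m ≤ n}

/-- The vector `(a_i / b_i) e_i + e_{i+u}` of `∏ j, ℤ/a_j`, where `e_{i+u}` is read as `0` when
`i + u` is out of range. For `b_i ∣ a_i` and `a_{i+u} ∣ b_i` it is killed by `b_i`, and these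
vectors generate the copy of `∏ i, ℤ/b_i` whose quotient has few generators. -/
def shiftVector (a : Fin n → ℕ) (b : Fin m → ℕ) (hmn : m ≤ n) (u : ℕ) (i : Fin m) :
    (j : Fin n) → ZMod (a j) := fun j =>
  (if j = Fin.castLE hmn i then ((a j / b i : ℕ) : ZMod (a j)) else 0) +
    if (j : ℕ) = i + u then 1 else 0

theorem shiftVector_apply_castLE (hu : 0 < u) (i : Fin m) :
    shiftVector a b hmn u i (Fin.castLE hmn i) = (a (Fin.castLE hmn i) / b i : ℕ) := by
  have hshift : (Fin.castLE hmn i : ℕ) ≠ i + u := (Nat.lt_add_of_pos_right hu).ne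
  rw [shiftVector, if_pos rfl, if_neg hshift, add_zero]

theorem shiftVector_apply_of_ne {i : Fin m} {j : Fin n} (hdiag : j ≠ Fin.castLE hmn i)
    (hshift : (j : ℕ) ≠ i + u) : shiftVector a b hmn u i j = 0 := by
  rw [shiftVector, if_neg hdiag, if_neg hshift, add_zero]

theorem zsmul_shiftVector_eq_zero {i : Fin m} (hba : b i ∣ a (Fin.castLE hmn i))
    (hab : ∀ j : Fin n, (j : ℕ) = i + u → a j ∣ b i) {z : ℤ}
    (hz : (b i : ℤ) ∣ z) : z • shiftVector a b hmn u i = 0 := by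
  funext j
  rw [Pi.smul_apply, shiftVector, smul_add, Pi.zero_apply]
  have hdiag : z • (if j = Fin.castLE hmn i then ((a j / b i : ℕ) : ZMod (a j)) else 0) = 0 := by
    split_ifs with hj
    · rw [zsmul_eq_mul, ← Int.cast_natCast, ← Int.cast_mul, ZMod.intCast_zmod_eq_zero_iff_dvd]
      subst hj
      nth_rw 1 [← Nat.mul_div_cancel' hba]
      push_cast
      exact mul_dvd_mul_right hz _
    · exact smul_zero z
  have hshift : z • (if (j : ℕ) = i + u then (1 : ZMod (a j)) else 0) = 0 := by
    split_ifs with hj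
    · rw [zsmul_one, ZMod.intCast_zmod_eq_zero_iff_dvd]
      exact (Int.natCast_dvd_natCast.2 (hab j hj)).trans hz
    · exact smul_zero z
  rw [hdiag, hshift, add_zero]

theorem sum_zsmul_shiftVector_eq_zero_iff (hu : 0 < u) (ha : ∀ j, a j ≠ 0)
    (hba : ∀ i, b i ∣ a (Fin.castLE hmn i))
    (hab : ∀ (i : Fin m) (j : Fin n), (j : ℕ) = i + u → a j ∣ b i) (z : Fin m → ℤ) :
    ∑ i, z i • shiftVector a b hmn u i = 0 ↔ ∀ i, (b i : ℤ) ∣ z i := by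
  refine ⟨fun hz i => ?_, fun hz =>
    Finset.sum_eq_zero fun i _ => zsmul_shiftVector_eq_zero (hba i) (hab i) (hz i)⟩
  induction i using WellFoundedLT.induction with
  | ind i ih =>
    have hne : ∀ i' ≠ i, z i' • shiftVector a b hmn u i' (Fin.castLE hmn i) = 0 := by
      intro i' hi'
      by_cases hlt : i' < i
      · exact congrFun (zsmul_shiftVector_eq_zero (hba i') (hab i') (ih i' hlt)) _
      · have hdiag : Fin.castLE hmn i ≠ Fin.castLE hmn i' :=
          fun h => hi' (Fin.castLE_injective hmn h).symm
        have hshift : (Fin.castLE hmn i : ℕ) ≠ i' + u :=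
          ((Fin.le_def.1 (not_lt.1 hlt)).trans_lt (Nat.lt_add_of_pos_right hu)).ne
        rw [shiftVector_apply_of_ne hdiag hshift, smul_zero]
    have hdiag : z i • shiftVector a b hmn u i (Fin.castLE hmn i) = 0 := by
      rw [← Finset.sum_eq_single i (fun i' _ => hne i') (fun h => absurd (Finset.mem_univ i) h)]
      simpa only [Finset.sum_apply, Pi.smul_apply, Pi.zero_apply] using
        congrFun hz (Fin.castLE hmn i)
    rw [shiftVector_apply_castLE hu, zsmul_eq_mul, ← Int.cast_natCast, ← Int.cast_mul,
      ZMod.intCast_zmod_eq_zero_iff_dvd] at hdiag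
    nth_rw 1 [← Nat.mul_div_cancel' (hba i)] at hdiag
    push_cast at hdiag
    refine Int.dvd_of_mul_dvd_mul_right ?_ hdiag
    exact_mod_cast (Nat.div_pos (Nat.le_of_dvd (Nat.pos_of_ne_zero (ha _)) (hba i))
      (Nat.pos_of_ne_zero fun h => ha _ (zero_dvd_iff.1 (h ▸ hba i)))).ne'

theorem shiftVector_eq_add_single {i : Fin m} {j : Fin n} (hj : (j : ℕ) = i + u) :
    shiftVector a b hmn u i =
      (a (Fin.castLE hmn i) / b i) • Pi.single (Fin.castLE hmn i) 1 + Pi.single j 1 := by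
  funext j'
  rw [shiftVector, Pi.add_apply, Pi.smul_apply]
  congr 1
  · split_ifs with h
    · subst h
      rw [Pi.single_eq_same, nsmul_one]
    · rw [Pi.single_eq_of_ne h, smul_zero]
  · split_ifs with h
    · obtain rfl : j' = j := Fin.ext (h.trans hj.symm)
      rw [Pi.single_eq_same]
    · rw [Pi.single_eq_of_ne (by rintro rfl; exact h hj)]

theorem closure_shiftVector_sup_closure_single_eq_top (hu : 0 < u) (hnm : n ≤ m + u) :
    AddSubgroup.closure (Set.range (shiftVector a b hmn u)) ⊔
      AddSubgroup.closure ((fun j => (Pi.single j 1 : (j : Fin n) → ZMod (a j))) ''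
        {j | (j : ℕ) < u}) = ⊤ := by
  set H := AddSubgroup.closure (Set.range (shiftVector a b hmn u)) ⊔ AddSubgroup.closure _
  suffices hsingle : ∀ j, Pi.single j 1 ∈ H by
    rw [eq_top_iff, ← closure_range_single_one_eq_top, AddSubgroup.closure_le]
    rintro _ ⟨j, rfl⟩
    exact hsingle j
  intro j
  induction j using WellFoundedLT.induction with
  | ind j ih =>
    by_cases hj : (j : ℕ) < u
    · exact AddSubgroup.mem_sup_right (AddSubgroup.subset_closure ⟨j, hj, rfl⟩)
    · obtain ⟨i, hi⟩ : ∃ i : Fin m, (j : ℕ) = i + u :=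
          ⟨⟨j - u, by omega⟩, (Nat.sub_add_cancel (not_lt.1 hj)).symm⟩
      have hlt : Fin.castLE hmn i < j := by
        rw [Fin.lt_def, Fin.val_castLE]
        omega
      have hmem : shiftVector a b hmn u i ∈ H :=
        AddSubgroup.mem_sup_left (AddSubgroup.subset_closure (Set.mem_range_self i))
      rw [shiftVector_eq_add_single hi] at hmem
      exact (AddSubgroup.add_mem_cancel_left _ (AddSubgroup.nsmul_mem _ (ih _ hlt) _)).1 hmem

theorem exists_addEquiv_pi_zmod_minGen_quotient_le (ha : ∀ j, a j ≠ 0)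
    (hba : ∀ i, b i ∣ a (Fin.castLE hmn i))
    (hab : ∀ (i : Fin m) (j : Fin n), (j : ℕ) = i + u → a j ∣ b i) (hnm : n ≤ m + u) :
    ∃ N : AddSubgroup ((j : Fin n) → ZMod (a j)),
      Nonempty (N ≃+ ((i : Fin m) → ZMod (b i))) ∧
      minGen (((j : Fin n) → ZMod (a j)) ⧸ N) ≤ u := by
  classical
  rcases Nat.eq_zero_or_pos u with rfl | hu
  · obtain rfl : m = n := le_antisymm hmn hnm
    obtain rfl : a = b := funext fun i => Nat.dvd_antisymm (hab i i rfl) (hba i)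
    exact ⟨⊤, ⟨AddSubgroup.topEquiv⟩, minGen_quotient_le_card (S := ∅) (top_sup_eq _)⟩
  · let S : Finset ((j : Fin n) → ZMod (a j)) :=
      (Finset.univ.filter fun j : Fin n => (j : ℕ) < u).image fun j => Pi.single j 1
    refine ⟨AddSubgroup.closure (Set.range (shiftVector a b hmn u)),
      nonempty_closure_range_addEquiv_pi_zmod
        (sum_zsmul_shiftVector_eq_zero_iff hu ha hba hab), ?_⟩
    have hS : AddSubgroup.closure (Set.range (shiftVector a b hmn u)) ⊔
        AddSubgroup.closure (S : Set _) = ⊤ := by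
      simpa [S] using closure_shiftVector_sup_closure_single_eq_top hu hnm
    exact (minGen_quotient_le_card hS).trans
      (Finset.card_image_le.trans (by simp [Fin.card_filter_val_lt]))

end TriangularSystem

section TypeCombinatorics

variable {n m : ℕ} {k : Fin n → ℕ} {l : Fin m → ℕ}

theorem card_le_sup_val_add_one (s : Finset (Fin m)) : s.card ≤ s.sup fun i => (i : ℕ) + 1 := by
  refine (Finset.card_le_card_of_injOn Fin.val (fun i hi => ?_) Fin.val_injective.injOn).trans_eq
    (Finset.card_range _)
  exact Finset.mem_coe.2 (Finset.mem_range.2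
    (Finset.le_sup (f := fun i : Fin m => (i : ℕ) + 1) (Finset.mem_coe.1 hi)))

theorem fTA_le (k : Fin n → ℕ) (l : Fin m → ℕ) (j : Fin n) : fTA k l j ≤ m :=
  Finset.sup_le fun i _ => i.2

theorem le_of_val_lt_fTA (hl : Antitone l) {i : Fin m} {j : Fin n} (h : (i : ℕ) < fTA k l j) :
    k j ≤ l i := by
  obtain ⟨i', hi', hlt⟩ := Finset.lt_sup_iff.1 h
  exact (Finset.mem_filter.1 hi').2.trans (hl (Fin.le_def.2 (Nat.lt_succ_iff.1 hlt)))

theorem val_add_one_le_fTA_add_uTA (k : Fin n → ℕ) (l : Fin m → ℕ) (j : Fin n) :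
    (j : ℕ) + 1 ≤ fTA k l j + uTA k l :=
  Nat.sub_le_iff_le_add'.1
    (Finset.le_sup (f := fun j : Fin n => (j : ℕ) + 1 - fTA k l j) (Finset.mem_univ j))

theorem le_add_uTA (k : Fin n → ℕ) (l : Fin m → ℕ) : n ≤ m + uTA k l := by
  cases n with
  | zero => exact Nat.zero_le _
  | succ n =>
    exact (val_add_one_le_fTA_add_uTA k l (Fin.last n)).trans
      (Nat.add_le_add_right (fTA_le k l _) _)

theorem le_of_val_eq_add_uTA (hl : Antitone l) {i : Fin m} {j : Fin n}
    (h : (j : ℕ) = i + uTA k l) : k j ≤ l i := by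
  have hj := val_add_one_le_fTA_add_uTA k l j
  exact le_of_val_lt_fTA hl (by omega)

end TypeCombinatorics

theorem uTA_le_minGen_quotient {p n m : ℕ} (hp : 1 < p) {k : Fin n → ℕ} {l : Fin m → ℕ}
    (hk : Antitone k) (hk1 : ∀ j, 1 ≤ k j) {N : AddSubgroup ((j : Fin n) → ZMod (p ^ k j))}
    (e : N ≃+ ((i : Fin m) → ZMod (p ^ l i))) :
    uTA k l ≤ minGen (((j : Fin n) → ZMod (p ^ k j)) ⧸ N) := by
  have : NeZero p := ⟨(zero_lt_one.trans hp).ne'⟩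
  have : Fact p.minFac.Prime := ⟨Nat.minFac_prime hp.ne'⟩
  refine Finset.sup_le fun j _ => Nat.sub_le_iff_le_add'.2 ?_
  have hq : ∀ j' ∈ Finset.Iic j, p.minFac ∣ p ^ k j' := fun j' _ =>
    p.minFac_dvd.trans (dvd_pow_self p (Nat.one_le_iff_ne_zero.1 (hk1 j')))
  have ht : ∀ i ∉ Finset.univ.filter (fun i => k j ≤ l i), ∀ j' ∈ Finset.Iic j,
      p.minFac * p ^ l i ∣ p ^ k j' := by
    intro i hi j' hj'
    have hlt : l i < k j' := by
      simp only [Finset.mem_filter, Finset.mem_univ, true_and, not_le] at hi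
      exact hi.trans_le (hk (Finset.mem_Iic.1 hj'))
    calc p.minFac * p ^ l i ∣ p * p ^ l i := mul_dvd_mul_right p.minFac_dvd _
      _ = p ^ (l i + 1) := (pow_succ' p _).symm
      _ ∣ p ^ k j' := pow_dvd_pow p hlt
  calc (j : ℕ) + 1 = (Finset.Iic j).card := (Fin.card_Iic j).symm
    _ ≤ _ := card_le_card_add_rank_quotient hq ht e
    _ ≤ fTA k l j + minGen (((j : Fin n) → ZMod (p ^ k j)) ⧸ N) := by
      rw [minGen_eq_rank]
      exact Nat.add_le_add_right (card_le_sup_val_add_one _) _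

theorem rank_quotient_min_eq_uTA_general
    (p : ℕ) (hp : 1 < p)
    (n m : ℕ) (k : Fin n → ℕ) (l : Fin m → ℕ)
    (hk : Antitone k) (hk1 : ∀ j, 1 ≤ k j)
    (hl : Antitone l)
    (hmn : m ≤ n) (hle : ∀ i : Fin m, l i ≤ k (Fin.castLE hmn i)) :
    IsLeast { v : ℕ | ∃ N : AddSubgroup ((j : Fin n) → ZMod (p ^ k j)),
        Nonempty (N ≃+ ((i : Fin m) → ZMod (p ^ l i))) ∧
        v = minGen (((j : Fin n) → ZMod (p ^ k j)) ⧸ N) }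
      (uTA k l) := by
  constructor
  · obtain ⟨N, ⟨e⟩, hN⟩ := exists_addEquiv_pi_zmod_minGen_quotient_le
      (fun j => pow_ne_zero (k j) (zero_lt_one.trans hp).ne') (fun i => pow_dvd_pow p (hle i))
      (fun _ _ h => pow_dvd_pow p (le_of_val_eq_add_uTA hl h)) (le_add_uTA k l)
    exact ⟨N, ⟨e⟩, (uTA_le_minGen_quotient hp hk hk1 e).antisymm hN⟩
  · rintro _ ⟨N, ⟨e⟩, rfl⟩
    exact uTA_le_minGen_quotient hp hk hk1 e

/-- Let `p > 2` be a prime, `τ = (k_1,…,k_n)` and `α = (ℓ_1,…,ℓ_m)`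
types with `α ≤ τ`.  The minimum, over all subgroups `N ≤ A(τ)` isomorphic to `A(α)`,
of the minimal number of generators of `A(τ)/N`, equals `u^τ_α`; in particular this
minimum is attained by some such subgroup. -/
theorem rank_quotient_min_eq_uTA
    (p : ℕ) (hp : p.Prime) (hp2 : 2 < p)
    (n m : ℕ) (k : Fin n → ℕ) (l : Fin m → ℕ)
    (hk : Antitone k) (hk1 : ∀ j, 1 ≤ k j)
    (hl : Antitone l) (hl1 : ∀ i, 1 ≤ l i)
    (hmn : m ≤ n) (hle : ∀ i : Fin m, l i ≤ k (Fin.castLE hmn i)) :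
    IsLeast { v : ℕ | ∃ N : AddSubgroup ((j : Fin n) → ZMod (p ^ k j)),
        Nonempty (N ≃+ ((i : Fin m) → ZMod (p ^ l i))) ∧
        v = minGen (((j : Fin n) → ZMod (p ^ k j)) ⧸ N) }
      (uTA k l) :=
  rank_quotient_min_eq_uTA_general p hp.one_lt n m k l hk hk1 hl hmn hle
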